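/- (Cumulants of a product of free variables.) Let (𝒜, 𝔼) be a B-valued probability space and let a, b ∈ 𝒜 be free. Define operator-valued cumulants κ = (κ_n) by 𝔼(a_1 ⋯ a_n) = Σ_{τ ∈ Y_n} κ_τ(a_1, …, a_n), and for c ∈ 𝒜 set k^c_n(x_1, …, x_n) = κ_n(x_1 c, x_2 c, …, x_n c). Then k^{ab} = k^a ⊠ k^b; explicitly, for all n ≥ 1 and x_1, …, x_n ∈ B: k^{ab}_n(x_1, …, x_n) = Σ_{τ ∈ Y_n} (k^a ∪ k^b)_{R(τ)}(x_1, 1, x_2, 1, …, 1, x_n, 1). -/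

import Mathlib

universe u

/-- Planar binary trees. -/
inductive PBTree : Type
  | leaf : PBTree
  | node : PBTree → PBTree → PBTree
deriving DecidableEq

namespace PBTree

/-- Number of internal vertices. -/
def size : PBTree → ℕ
  | .leaf => 0
  | .node l r => l.size + r.size + 1

end PBTree

namespace PBTree

/-- The vertex-doubling map `R : Y → Y`, `R(|) = |`, `R(σ ∨ τ) = (| ∨ R σ) ∨ R τ`. -/
def R : PBTree → PBTree
  | .leaf => .leaf
  | .node σ τ => .node (.node .leaf (R σ)) (R τ)

end PBTree

/-- The finite set `Y_n` of planar binary trees with `n` internal vertices. -/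
def treesOfSize : ℕ → Finset PBTree
  | 0 => {PBTree.leaf}
  | n + 1 => (Finset.range (n + 1)).attach.biUnion fun k =>
      Finset.image₂ PBTree.node (treesOfSize k.1) (treesOfSize (n - k.1))
termination_by n => n
decreasing_by
  · have := Finset.mem_range.mp k.2; omega
  · omega

section TreeEval

variable {A B : Type u} [Ring A] [Ring B]

/-- Apply a series of functions to the entries of a list. -/
def appG (f : ∀ n : ℕ, (Fin n → A) → B) (l : List A) : B := f l.length fun i => l.get i

mutual

/-- The alternating tree evaluation `(f ∪ g)_τ`: the root level uses `g`,
nested levels alternate, and the empty tree evaluates to `1`. -/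
def treeEvalG (smul : B → A → A) (f g : ∀ n : ℕ, (Fin n → A) → B) : PBTree → List A → B
  | .leaf, _ => 1
  | .node σ ρ, x => appG g (argListG smul f g (.node σ ρ) x)
termination_by t _ => (sizeOf t, 1)

/-- The list of top-level arguments in the recursive definition of `(f ∪ g)_τ`. -/
def argListG (smul : B → A → A) (f g : ∀ n : ℕ, (Fin n → A) → B) : PBTree → List A → List A
  | .leaf, _ => []
  | .node σ ρ, x =>
      smul (treeEvalG smul g f σ (x.take σ.size)) (x.getD σ.size 1)
        :: argListG smul f g ρ (x.drop (σ.size + 1))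
termination_by t _ => (sizeOf t, 0)

end

end TreeEval

namespace OVC

/-- Sum over all ways of writing `l = p ++ y :: q`. -/
def spe {α β : Type*} [AddCommMonoid β] : List α → (List α → α → List α → β) → β
  | [], _ => 0
  | x :: xs, Φ => Φ [] x xs + spe xs (fun p y q => Φ (x :: p) y q)

/-- Sum over all compositions of a list into blocks `p ++ [y]` (with pending block `p`)
of `F` applied to the list of block weights. -/
def G {α γ β : Type*} [AddCommMonoid β] (W : List α → α → γ) :
    (List γ → β) → List α → List α → β
  | F, p, [] => if p.isEmpty then F [] else 0
  | F, p, x :: xs => G W (fun t => F (W p x :: t)) [] xs + G W F (p ++ [x]) xs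

/-- The same with the last block singled out. -/
def Lst {α γ β : Type*} [AddCommMonoid β] (W : List α → α → γ) :
    (List γ → γ → β) → List α → List α → α → β
  | Φ, p, [], y => Φ [] (W p y)
  | Φ, p, x :: xs, y => Lst W (fun s z => Φ (W p x :: s) z) [] xs y + Lst W Φ (p ++ [x]) xs y

section spe
variable {α β : Type*} [AddCommMonoid β]

theorem spe_congr (l : List α) (Φ Ψ : List α → α → List α → β)
    (h : ∀ p y q, l = p ++ y :: q → Φ p y q = Ψ p y q) : spe l Φ = spe l Ψ := by
  induction l generalizing Φ Ψ with
  | nil => rfl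
  | cons x xs ih =>
    simp only [spe]
    rw [h [] x xs rfl, ih _ (fun p y q => Ψ (x :: p) y q)]
    intro p y q e
    exact h _ _ _ (by simp [e])

theorem spe_add (l : List α) (Φ Ψ : List α → α → List α → β) :
    spe l (fun p y q => Φ p y q + Ψ p y q) = spe l Φ + spe l Ψ := by
  induction l generalizing Φ Ψ with
  | nil => simp [spe]
  | cons x xs ih =>
    simp only [spe, ih]
    abel

theorem spe_hom {β' : Type*} [AddCommMonoid β'] (h : β →+ β') (l : List α)
    (Φ : List α → α → List α → β) :
    h (spe l Φ) = spe l (fun p y q => h (Φ p y q)) := by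
  induction l generalizing Φ with
  | nil => simp [spe]
  | cons x xs ih => simp [spe, ih]

theorem spe_zero (l : List α) : spe l (fun _ _ _ => (0 : β)) = 0 := by
  induction l with
  | nil => simp [spe]
  | cons x xs ih => simp [spe, ih]

theorem spe_coassoc (l : List α) (Φ : List α → α → List α → α → List α → β) :
    spe l (fun p y q => spe p (fun p₁ w p₂ => Φ p₁ w p₂ y q))
      = spe l (fun p₁ w r => spe r (fun p₂ y q => Φ p₁ w p₂ y q)) := by
  induction l generalizing Φ with
  | nil => rfl
  | cons x xs ih =>
    simp only [spe, spe_add, zero_add]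
    rw [ih (fun p₁ w p₂ y q => Φ (x :: p₁) w p₂ y q)]

theorem spe_eq_sum (l : List α) (Φ : List α → α → List α → β) (Ψ : ℕ → β)
    (h : ∀ p y q, l = p ++ y :: q → Φ p y q = Ψ p.length) :
    spe l Φ = ∑ k ∈ Finset.range l.length, Ψ k := by
  induction l generalizing Φ Ψ with
  | nil => rfl
  | cons x xs ih =>
    simp only [spe, List.length_cons]
    rw [Finset.sum_range_succ', h [] x xs rfl, ih _ (fun k => Ψ (k + 1))]
    · simp [add_comm]
    · intro p y q e
      simpa using h (x :: p) y q (by simp [e])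

end spe

section G
variable {α γ β : Type*} [AddCommMonoid β] (W : List α → α → γ)

theorem G_congr (F F' : List γ → β) (p l : List α)
    (h : ∀ t, t.length ≤ l.length → F t = F' t) : G W F p l = G W F' p l := by
  induction l generalizing F F' p with
  | nil => simp only [G]; rw [h [] (by simp)]
  | cons x xs ih =>
    simp only [G]
    rw [ih _ (fun t => F' (W p x :: t)) [] (fun t ht => h _ (by simpa using ht)),
      ih F F' _ (fun t ht => h _ (by simp; omega))]

theorem G_congrW (W' : List α → α → γ) (F : List γ → β) (p l : List α)
    (h : ∀ s y r, p ++ l = s ++ y :: r → W s y = W' s y)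
    (h' : ∀ s₀ s y r, l = s₀ ++ s ++ y :: r → W s y = W' s y) :
    G W F p l = G W' F p l := by
  induction l generalizing F p with
  | nil => rfl
  | cons x xs ih =>
    simp only [G]
    rw [h p x xs rfl, ih (fun t => F (W' p x :: t)) [], ih F (p ++ [x])]
    · intro s y r e
      exact h s y r (by simpa using e)
    · intro s₀ s y r e
      exact h' (x :: s₀) s y r (by simp [e])
    · intro s y r e
      exact h' [x] s y r (by simpa using e)
    · intro s₀ s y r e
      exact h' (x :: s₀) s y r (by simp [e])

theorem G_hom {β' : Type*} [AddCommMonoid β'] (h : β →+ β') (F : List γ → β) (p l : List α) :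
    h (G W F p l) = G W (fun t => h (F t)) p l := by
  induction l generalizing F p with
  | nil => simp only [G]; split <;> simp
  | cons x xs ih => simp [G, ih]

theorem G_add (F F' : List γ → β) (p l : List α) :
    G W (fun t => F t + F' t) p l = G W F p l + G W F' p l := by
  induction l generalizing F F' p with
  | nil => simp only [G]; split <;> simp
  | cons x xs ih =>
    simp only [G, ih]
    abel

theorem G_map {α' γ' : Type*} (W' : List α' → α' → γ') (f : α' → α) (g : γ' → γ)
    (h : ∀ p y, W (p.map f) (f y) = g (W' p y)) (F : List γ → β) (p l : List α') :
    G W F (p.map f) (l.map f) = G W' (fun t => F (t.map g)) p l := by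
  induction l generalizing F p with
  | nil => cases p <;> simp [G]
  | cons x xs ih =>
    simp only [G, List.map_cons, h]
    have h1 := ih (fun t => F (g (W' p x) :: t)) []
    have h2 := ih F (p ++ [x])
    simp only [List.map_nil, List.map_append, List.map_cons] at h1 h2
    rw [h1, h2]

/-- First block expansion. -/
theorem G_spe (F : List γ → β) (p l : List α) (hp : p ≠ [] ∨ l ≠ []) :
    G W F p l = spe l (fun s y q => G W (fun t => F (W (p ++ s) y :: t)) [] q) := by
  induction l generalizing F p with
  | nil => simp at hp; simp [G, spe, hp]
  | cons x xs ih =>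
    simp only [G, spe, List.append_nil]
    rw [ih F (p ++ [x]) (by simp)]
    simp

theorem G_van (F : List γ → β) (p l : List α) (hp : p ≠ [])
    (h : ∀ t, t ≠ [] → t.length ≤ l.length → F t = 0) : G W F p l = 0 := by
  induction l generalizing F p with
  | nil => simp [G, hp]
  | cons x xs ih =>
    simp only [G]
    rw [ih F _ (by simp) (fun t h0 ht => h t h0 (by simp; omega)),
      G_congr W _ (fun _ => 0) [] xs (fun t ht => h _ (by simp) (by simpa using ht))]
    have := G_hom W (0 : β →+ β) (fun _ => 0) [] xs
    simp at this
    simp [← this]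

theorem G_top (F : List γ → β) (l : List α)
    (h : ∀ t, t ≠ [] → t.length < l.length → F t = 0) : G W F [] l = F (l.map (W [])) := by
  induction l generalizing F with
  | nil => simp [G]
  | cons x xs ih =>
    simp only [G, List.map_cons]
    rw [ih _ (fun t h0 ht => h _ (by simp) (by simpa using ht)),
      G_van W F _ xs (by simp) (fun t h0 ht => h t h0 (by simp; omega)), add_zero]

theorem G_snoc (F : List γ → β) (p l : List α) (y : α) :
    G W F p (l ++ [y]) = Lst W (fun s z => F (s ++ [z])) p l y := by
  induction l generalizing F p with
  | nil => simp [G, Lst]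
  | cons x xs ih =>
    simp only [List.cons_append, G, Lst, ih]

theorem Lst_hom {β' : Type*} [AddCommMonoid β'] (h : β →+ β') (Φ : List γ → γ → β)
    (p l : List α) (y : α) :
    h (Lst W Φ p l y) = Lst W (fun s z => h (Φ s z)) p l y := by
  induction l generalizing Φ p with
  | nil => simp [Lst]
  | cons x xs ih => simp [Lst, ih]

theorem Lst_split (Φ : List γ → γ → β) (p xs : List α) (y : α) :
    Lst W Φ p xs y = G W (fun t => Φ t (W [] y)) p xs
      + spe xs (fun p₁ w p₂ => G W (fun t => Φ t (W (w :: p₂) y)) p p₁)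
      + (if p.isEmpty then 0 else Φ [] (W (p ++ xs) y)) := by
  induction xs generalizing Φ p with
  | nil => cases p <;> simp [Lst, G, spe]
  | cons x xs ih =>
    simp only [Lst, G, spe, ih, spe_add]
    cases p
    · simp; abel
    · simp; abel

theorem G_spe_key (H : List γ → γ → List γ → β) (p₀ l : List α) :
    G W (fun t => spe t H) p₀ l
      = spe l (fun p y q => Lst W (fun s z => G W (H s z) [] q) p₀ p y) := by
  induction l generalizing H p₀ with
  | nil => simp [G, spe]
  | cons y l ih =>
    simp only [G, spe, Lst, spe_add, G_add]
    rw [ih (fun p z q => H (W p₀ y :: p) z q), ih H (p₀ ++ [y])]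
    abel

/-- Additivity of `F` in each slot. -/
def AddF {γ β : Type*} [Add γ] [Add β] (F : List γ → β) : Prop :=
  ∀ p u v q, F (p ++ (u + v) :: q) = F (p ++ u :: q) + F (p ++ v :: q)

theorem AddF.cons {γ β : Type*} [Add γ] [Add β] {F : List γ → β} (h : AddF F) (w : γ) :
    AddF (fun t => F (w :: t)) := fun p u v q => h (w :: p) u v q

/-- Composition is associative. -/
theorem G_comp {α γ δ β : Type*} [AddCommGroup β] [AddCommGroup δ] (U : List α → α → γ)
    (X : List γ → γ → δ) (F : List δ → β) (hF : AddF F) (l : List α) :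
    G U (fun t => G X F [] t) [] l = G (Lst U X []) F [] l := by
  induction hn : l.length using Nat.strong_induction_on generalizing l F with
  | _ n ih =>
  subst hn
  by_cases hl : l = []
  · subst hl; simp [G]
  have e1 : G U (fun t => G X F [] t) [] l
      = G U (fun t => spe t (fun s y q => G X (fun t => F (X s y :: t)) [] q)) [] l := by
    rw [G_spe U _ [] l (Or.inr hl), G_spe U _ [] l (Or.inr hl)]
    apply spe_congr
    intro p y q _
    apply G_congr
    intro t _
    rw [G_spe X F [] _ (Or.inr (by simp))]
    simp
  rw [e1, G_spe_key, G_spe _ _ [] l (Or.inr hl)]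
  apply spe_congr
  intro p y q e
  have hq : q.length < l.length := by rw [e]; simp; omega
  simp only [List.nil_append]
  have e2 : (fun s z => G U (fun t => G X (fun t => F (X s z :: t)) [] t) [] q)
      = fun s z => G (Lst U X []) (fun t => F (X s z :: t)) [] q := by
    funext s z
    exact ih _ hq _ (hF.cons _) q rfl
  rw [e2]
  let h : δ →+ β := AddMonoidHom.mk' (fun z => G (Lst U X []) (fun t => F (z :: t)) [] q) (by
    intro u v
    rw [← G_add]
    apply G_congr
    intro t _
    exact hF [] u v t)
  exact (Lst_hom U h X [] p y).symm

/-- Additivity of the block sums in the list. -/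
theorem G_addF_pend {α γ β : Type*} [AddCommGroup β] [Add γ] [Add α] (W : List α → α → γ)
    (hW : ∀ p u v q y, W (p ++ (u + v) :: q) y = W (p ++ u :: q) y + W (p ++ v :: q) y)
    (F : List γ → β) (hF : AddF F) (p : List α) (u v : α) (q l : List α) :
    G W F (p ++ (u + v) :: q) l = G W F (p ++ u :: q) l + G W F (p ++ v :: q) l := by
  induction l generalizing F q with
  | nil => simp [G]
  | cons x xs ih =>
    simp only [G, List.append_assoc, List.cons_append]
    rw [ih F hF, hW]
    have : ∀ t, F ((W (p ++ u :: q) x + W (p ++ v :: q) x) :: t)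
      = F (W (p ++ u :: q) x :: t) + F (W (p ++ v :: q) x :: t) := fun t => hF [] _ _ t
    simp only [this, G_add]
    abel

theorem G_addF {α γ β : Type*} [AddCommGroup β] [Add γ] [Add α] (W : List α → α → γ)
    (hW : ∀ p u v q y, W (p ++ (u + v) :: q) y = W (p ++ u :: q) y + W (p ++ v :: q) y)
    (hW' : ∀ p u v, W p (u + v) = W p u + W p v)
    (F : List γ → β) (hF : AddF F) (p₀ : List α) (p : List α) (u v : α) (q : List α) :
    G W F p₀ (p ++ (u + v) :: q) = G W F p₀ (p ++ u :: q) + G W F p₀ (p ++ v :: q) := by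
  induction p generalizing F p₀ with
  | nil =>
    simp only [G, List.nil_append]
    have : ∀ t, F ((W p₀ u + W p₀ v) :: t)
      = F (W p₀ u :: t) + F (W p₀ v :: t) := fun t => hF [] _ _ t
    simp only [hW', this, G_add, G_addF_pend W hW F hF]
    abel
  | cons x xs ih =>
    simp only [G, List.cons_append]
    rw [ih _ (hF.cons _), ih F hF]
    abel

end G

section Trees

theorem size_of_mem : ∀ (n : ℕ) (τ : PBTree), τ ∈ treesOfSize n → τ.size = n := by
  intro n
  induction n using Nat.strong_induction_on with
  | _ n ih =>
  intro τ h
  cases n with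
  | zero => simp [treesOfSize] at h; subst h; rfl
  | succ n =>
    rw [treesOfSize] at h
    simp only [Finset.mem_biUnion, Finset.mem_attach, true_and, Subtype.exists,
      Finset.mem_image₂] at h
    obtain ⟨k, hk, σ, hσ, ρ, hρ, rfl⟩ := h
    have := Finset.mem_range.mp hk
    simp only [PBTree.size, ih k (by omega) σ hσ, ih (n - k) (by omega) ρ hρ]
    omega

theorem sum_trees {β : Type*} [AddCommMonoid β] (n : ℕ) (f : PBTree → β) :
    ∑ τ ∈ treesOfSize (n + 1), f τ = ∑ k ∈ Finset.range (n + 1),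
      ∑ σ ∈ treesOfSize k, ∑ ρ ∈ treesOfSize (n - k), f (.node σ ρ) := by
  rw [treesOfSize, Finset.sum_biUnion]
  · rw [← Finset.sum_attach (Finset.range (n + 1))]
    apply Finset.sum_congr rfl
    intro k _
    rw [Finset.image₂, Finset.sum_image, Finset.sum_product]
    · rfl
    rintro ⟨a, b⟩ _ ⟨c, d⟩ _ h
    simpa using h
  · intro i _ j _ hij
    rw [Function.onFun, Finset.disjoint_left]
    intro τ h1 h2
    simp only [Finset.mem_image₂] at h1 h2
    obtain ⟨σ, hσ, ρ, hρ, rfl⟩ := h1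
    obtain ⟨σ', hσ', ρ', hρ', e⟩ := h2
    injection e with e1 e2
    subst e1
    exact hij (Subtype.ext ((size_of_mem _ _ hσ).symm.trans (size_of_mem _ _ hσ')))

theorem sum_trees_G {α γ β : Type*} [AddCommGroup β] [AddCommGroup γ]
    (al : PBTree → List α → List γ) (w : PBTree → List α → α → γ)
    (hleaf : al .leaf [] = [])
    (hnode : ∀ σ ρ p y q, σ.size = p.length → ρ.size = q.length →
      al (.node σ ρ) (p ++ y :: q) = w σ p y :: al ρ q)
    (l : List α) (F : List γ → β)
    (hF : ∀ p u v q, p.length + q.length + 1 < l.length →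
      F (p ++ (u + v) :: q) = F (p ++ u :: q) + F (p ++ v :: q)) :
    ∑ τ ∈ treesOfSize l.length, F (al τ l)
      = G (fun p y => ∑ σ ∈ treesOfSize p.length, w σ p y) F [] l := by
  induction hn : l.length using Nat.strong_induction_on generalizing l F with
  | _ n ih =>
  subst hn
  cases l with
  | nil => simp [treesOfSize, G, hleaf]
  | cons x xs =>
  rw [List.length_cons, sum_trees, G_spe _ _ _ _ (Or.inr (by simp)), eq_comm]
  rw [← List.length_cons (a := x)]
  apply spe_eq_sum
  intro p y q e
  have hlen : xs.length = p.length + q.length := by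
    have := congrArg List.length e
    simp at this; omega
  have hq : xs.length - p.length = q.length := by omega
  rw [hq, List.nil_append]
  have e1 : ∀ σ ∈ treesOfSize p.length, ∑ ρ ∈ treesOfSize q.length, F (al (.node σ ρ) (x :: xs))
      = G (fun p y => ∑ σ ∈ treesOfSize p.length, w σ p y) (fun t => F (w σ p y :: t)) [] q := by
    intro σ hσ
    rw [← ih q.length (by simp; omega) q (fun t => F (w σ p y :: t)) _ rfl]
    · apply Finset.sum_congr rfl
      intro ρ hρ
      rw [e, hnode _ _ _ _ _ (size_of_mem _ _ hσ) (size_of_mem _ _ hρ)]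
    · intro p' u v q' h
      exact hF (w σ p y :: p') u v q' (by simp; omega)
  rw [Finset.sum_congr rfl e1]
  by_cases hp : p = []
  · subst hp
    simp [treesOfSize]
  · have hp' : 0 < p.length := List.length_pos_iff.mpr hp
    let h : γ →+ β := AddMonoidHom.mk'
      (fun z => G (fun p y => ∑ σ ∈ treesOfSize p.length, w σ p y) (fun t => F (z :: t)) [] q) (by
        intro u v
        rw [← G_add]
        apply G_congr
        intro t ht
        exact hF [] u v t (by simp; omega))
    exact map_sum h _ _

end Trees

end OVC
namespace OVC

section Abstract
variable {B : Type*} [Ring B]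

/-- Interleave two letter maps. -/
def altg {α β : Type*} (f₁ f₂ : α → β) : List α → List β
  | [] => []
  | y :: ys => f₁ y :: f₂ y :: altg f₁ f₂ ys

theorem altg_append {α β : Type*} (f₁ f₂ : α → β) (p q : List α) :
    altg f₁ f₂ (p ++ q) = altg f₁ f₂ p ++ altg f₁ f₂ q := by
  induction p with
  | nil => rfl
  | cons x xs ih => simp [altg, ih]

theorem altg_swap {α β : Type*} (f₁ f₂ : α → β) (hc : ∀ x y, f₂ x = f₂ y)
    (p : List α) (z : α) :
    altg f₁ f₂ p ++ [f₁ z] = match p ++ [z] with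
      | [] => []
      | x :: r => f₁ x :: altg f₂ f₁ r := by
  induction p with
  | nil => rfl
  | cons x xs ih =>
    simp only [altg, List.cons_append, ih]
    cases xs <;> simp [altg] <;> exact hc _ _

/-- Weight of a tagged block. -/
def Wt (m : List (B × Bool) → B) (p : List (B × Bool)) (y : B × Bool) : B × Bool :=
  (m p * y.1, y.2)

/-- Vanishing on mixed lists. -/
def VB (F : List (B × Bool) → B) : Prop :=
  ∀ t z z' c, (z, c) ∈ t → (z', !c) ∈ t → F t = 0

theorem VB.cons {F : List (B × Bool) → B} (h : VB F) (w : B × Bool) :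
    VB (fun t => F (w :: t)) := fun t z z' c h1 h2 =>
  h _ z z' c (List.mem_cons_of_mem _ h1) (List.mem_cons_of_mem _ h2)

theorem G_Z (m : List (B × Bool) → B) (c : Bool) (F : List (B × Bool) → B)
    (hF : ∀ t z, (z, c) ∈ t → F t = 0) (p l : List (B × Bool)) (z : B) :
    G (Wt m) F p (l ++ [(z, c)]) = 0 := by
  induction l generalizing F p with
  | nil =>
    simp only [List.nil_append, G]
    rw [hF [Wt m p (z, c)] (m p * z) (by simp [Wt])]
    simp
  | cons x xs ih =>
    simp only [List.cons_append, G]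
    rw [ih F hF, ih _ (fun t z h => hF _ z (List.mem_cons_of_mem _ h)), add_zero]

theorem G_Z' (m : List (B × Bool) → B) (c : Bool) (F : List (B × Bool) → B)
    (hF : ∀ t z, (z, c) ∈ t → F t = 0) (p l : List (B × Bool)) (f₁ f₂ : B → B × Bool)
    (h2 : ∀ y, (f₂ y).2 = c) (l0 : B × Bool) (h0 : l0.2 = c) (xs : List B) :
    G (Wt m) F p (l0 :: altg f₁ f₂ xs) = 0 := by
  rcases List.eq_nil_or_concat xs with rfl | ⟨ys, y, rfl⟩
  · obtain ⟨z, c'⟩ := l0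
    simp only at h0
    subst h0
    exact G_Z m _ F hF p [] z
  · have e : l0 :: altg f₁ f₂ (ys.concat y)
      = (l0 :: altg f₁ f₂ ys ++ [f₁ y]) ++ [((f₂ y).1, c)] := by
      rw [← h2 y]
      simp [altg_append, altg]
    rw [e]
    exact G_Z m _ F hF p _ _

theorem C1g (m : List (B × Bool) → B) (c : Bool) (f₁ f₂ : B → B × Bool)
    (h1 : ∀ y, (f₁ y).2 = !c) (h2 : ∀ y, (f₂ y).2 = c) (W' : List B → B → B)
    (hW : ∀ p y, Wt m (altg f₁ f₂ p ++ [f₁ y]) (f₂ y) = (W' p y, c))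
    (F : List (B × Bool) → B) (hF : VB F) (p xs : List B) :
    G (Wt m) F (altg f₁ f₂ p) (altg f₁ f₂ xs)
      = G W' (fun t => F (t.map (fun z => (z, c)))) p xs := by
  induction xs generalizing F p with
  | nil => cases p <;> simp [G, altg]
  | cons y ys ih =>
    have h0 := G_Z' m c (fun t => F (Wt m (altg f₁ f₂ p) (f₁ y) :: t)) (by
      intro t z h
      refine hF _ z (m (altg f₁ f₂ p) * (f₁ y).1) c (List.mem_cons_of_mem _ h) ?_
      simp [Wt, ← h1 y]) [] [] f₁ f₂ h2 (f₂ y) (h2 y) ys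
    simp only [altg, G] at h0 ⊢
    rw [h0, zero_add, hW]
    · have i1 := ih (fun t => F ((W' p y, c) :: t)) (hF.cons _) []
      have i2 := ih F hF (p ++ [y])
      simp only [altg, altg_append] at i1 i2
      simp only [List.append_assoc, List.cons_append, List.nil_append]
      rw [i1, i2]
      simp

/-- Letters. -/
def la (y : B) : B × Bool := (y, false)
/-- Letters. -/
def lb (_ : B) : B × Bool := (1, true)

theorem altg_lb (p : List B) :
    altg lb la p ++ [((1 : B), true)] = (1, true) :: altg la lb p := by
  induction p with
  | nil => rfl
  | cons x xs ih => simp [altg, ih]; simp [la, lb]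

variable (m : List (B × Bool) → B) (Kt : List (B × Bool) → B)

theorem C2 (F : List (B × Bool) → B) (hF : VB F) (p₀ : List B) (x : B) (r : List B) :
    G (Wt m) F (altg la lb p₀) (la x :: altg lb la r)
      = spe (x :: r) (fun p y q =>
          G (fun p y => m ((1, true) :: altg la lb p) * y)
            (fun t => F ((m (altg la lb (p₀ ++ p)) * y, false) :: t.map (fun z => (z, false))))
            [] q) := by
  induction r generalizing p₀ x with
  | nil => simp [G, spe, altg, Wt, la]
  | cons x' r ih =>
    rw [spe]
    simp only [G, List.append_nil]
    congr 1
    · have := C1g m false lb la (fun _ => rfl) (fun _ => rfl)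
        (fun p y => m ((1, true) :: altg la lb p) * y) (by
          intro p y
          simp only [Wt, lb, altg_lb, la]) _ (hF.cons (Wt m (altg la lb p₀) (la x))) []
          (x' :: r)
      exact this
    · have i := ih (p₀ ++ [x]) x'
      simp only [altg_append, altg] at i
      simp only [altg, G]
      have hz := G_Z' m false
        (fun t => F (Wt m (altg la lb p₀ ++ [la x]) (lb x') :: t))
        (fun t z h => hF _ z (m (altg la lb p₀ ++ [la x]) * 1) false
          (List.mem_cons_of_mem _ h) (by simp [Wt, lb])) [] [] lb la (fun _ => rfl) (la x') rfl r
      simp only [G] at hz i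
      rw [hz, zero_add]
      simp only [List.append_assoc, List.cons_append, List.nil_append] at i ⊢
      have e : (lb x' : B × Bool) = lb x := rfl
      rw [e, i]
      simp only [altg_append, altg, List.append_assoc, List.cons_append, List.nil_append]

theorem C2' (hT1 : ∀ l, l ≠ [] → m l = G (Wt m) Kt [] l) (hK : VB Kt) (p : List B) (y : B) :
    m (altg la lb p ++ [la y])
      = spe (p ++ [y]) (fun p y q =>
          G (fun p y => m ((1, true) :: altg la lb p) * y)
            (fun t => Kt (((m (altg la lb p) * y) :: t).map (fun z => (z, false))))
            [] q) := by
  rw [hT1 _ (by simp), altg_swap _ _ (fun _ _ => rfl)]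
  obtain ⟨x, r, e⟩ : ∃ x r, p ++ [y] = x :: r := by
    cases p <;> simp
  simp only [e]
  exact C2 m Kt hK [] x r

theorem spe_altg {β : Type*} [AddCommMonoid β] (f₁ f₂ : B → B × Bool) (xs : List B)
    (Φ : List (B × Bool) → B × Bool → List (B × Bool) → β) :
    spe (altg f₁ f₂ xs) Φ
      = spe xs (fun p y q => Φ (altg f₁ f₂ p) (f₁ y) (f₂ y :: altg f₁ f₂ q))
        + spe xs (fun p y q => Φ (altg f₁ f₂ p ++ [f₁ y]) (f₂ y) (altg f₁ f₂ q)) := by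
  induction xs generalizing Φ with
  | nil => simp [spe, altg]
  | cons x xs ih =>
    simp only [spe, altg, ih, List.nil_append, List.cons_append]
    abel

theorem C1b (F : List (B × Bool) → B) (hF : VB F) (xs : List B) :
    G (Wt m) F [] (altg la lb xs)
      = G (fun p y => m (altg la lb p ++ [la y]))
        (fun t => F (t.map (fun z => (z, true)))) [] xs :=
  C1g m true la lb (fun _ => rfl) (fun _ => rfl) (fun p y => m (altg la lb p ++ [la y]))
    (by intro p y; simp [Wt, lb]) F hF [] xs

theorem C3 (hT2 : ∀ u l, m (u :: l) = G (Wt m) (fun t => Kt (u :: t)) [] l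
      + spe l (fun p y q => G (Wt m) (fun t => Kt (u :: t)) [] p * m (y :: q)))
    (hK : VB Kt) (xs : List B) :
    m ((1, true) :: altg la lb xs)
      = G (fun p y => m (altg la lb p ++ [la y]))
          (fun t => Kt ((1 :: t).map (fun z => (z, true)))) [] xs
        + spe xs (fun p y q => G (fun p y => m (altg la lb p ++ [la y]))
          (fun t => Kt ((1 :: t).map (fun z => (z, true)))) [] p * m (altg la lb (y :: q))) := by
  rw [hT2, spe_altg, C1b m _ (hK.cons _)]
  have : ∀ p y q, G (Wt m) (fun t => Kt ((1, true) :: t)) [] (altg la lb p ++ [la y])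
      * m (lb y :: altg la lb q) = 0 := by
    intro p y q
    rw [la, G_Z m false, zero_mul]
    intro t z h
    exact hK _ z 1 false (List.mem_cons_of_mem _ h) (by simp)
  simp only [this, spe_zero, add_zero, C1b m _ (hK.cons _)]
  rfl

theorem abstract_main (hm0 : m [] = 1) (hT1 : ∀ l, l ≠ [] → m l = G (Wt m) Kt [] l)
    (hT2 : ∀ u l, m (u :: l) = G (Wt m) (fun t => Kt (u :: t)) [] l
      + spe l (fun p y q => G (Wt m) (fun t => Kt (u :: t)) [] p * m (y :: q)))
    (hK : VB Kt) (ka kb : List B → B)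
    (hka : ∀ t, ka t = Kt (t.map (fun z => (z, false))))
    (hkb : ∀ t, kb t = Kt (t.map (fun z => (z, true))))
    (hka' : AddF ka) (hkb' : AddF kb)
    (N Q : List B → B)
    (hN : ∀ xs, N xs = G (fun p y => Q (p ++ [y])) (fun t => kb (1 :: t)) [] xs)
    (hQ : ∀ z t, Q (z :: t) = G (fun p y => N p * y) (fun t => ka (z :: t)) [] t)
    (xs : List B) (hxs : xs ≠ []) :
    m (altg la lb xs) = G (fun p y => m (altg la lb p) * y)
      (fun t => G (fun p y => Q (p ++ [y])) kb [] t) [] xs := by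
  set U : List B → B → B := fun p y => m (altg la lb p) * y with hU
  have key : ∀ (p : List B) (y : B),
      m (altg la lb p ++ [la y]) = Lst U (fun p y => Q (p ++ [y])) [] p y := by
    intro p
    induction hn : p.length using Nat.strong_induction_on generalizing p with
    | _ n ih =>
    subst hn
    intro y
    have hNt : ∀ s : List B, s.length < p.length →
        G U N [] s = G (fun p y => m (altg la lb p ++ [la y])) (fun t => kb (1 :: t)) [] s := by
      intro s hs
      have e : N = fun t => G (fun p y => Q (p ++ [y])) (fun t => kb (1 :: t)) [] t := by
        funext t; exact hN t
      rw [e, G_comp _ _ _ (hkb'.cons 1)]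
      apply G_congrW
      · intro s' y' r e'
        have := congrArg List.length e'
        simp at this
        exact (ih s'.length (by omega) s' rfl y').symm
      · intro s₀ s' y' r e'
        have := congrArg List.length e'
        simp at this
        exact (ih s'.length (by omega) s' rfl y').symm
    have hM : ∀ s y, s.length < p.length →
        m ((1, true) :: altg la lb s) * y = Lst U (fun p y => N p * y) [] s y := by
      intro s y hs
      rw [C3 m Kt hT2 hK, Lst_split]
      have e0 : (fun t => Kt ((1 :: t).map (fun z => (z, true)))) = fun t => kb (1 :: t) := by
        funext t; rw [hkb]
      have hmul : ∀ c q, G U (fun t => N t * c) [] q = G U N [] q * c := fun c q =>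
        (G_hom U (AddMonoidHom.mulRight c) N [] q).symm
      simp only [e0, hmul, List.isEmpty_nil, if_true, add_zero, add_mul]
      congr 1
      · rw [hNt s hs]; simp [hU, altg, hm0]
      · have := spe_hom (AddMonoidHom.mulRight y) s (fun p y q =>
          G (fun p y => m (altg la lb p ++ [la y])) (fun t => kb (1 :: t)) [] p
            * m (altg la lb (y :: q)))
        simp only [AddMonoidHom.mulRight_apply] at this
        rw [this]
        apply spe_congr
        intro p₁ w p₂ e
        rw [hNt p₁ (by rw [e] at hs; simp at hs; omega), hU, mul_assoc]
    rw [C2' m Kt hT1 hK]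
    have e1 := G_snoc U Q [] p y
    rw [← e1, G_spe U Q [] _ (Or.inr (by simp))]
    apply spe_congr
    intro p' y' q e
    have hq : q.length ≤ p.length := by
      have := congrArg List.length e
      simp at this; omega
    simp only [List.nil_append, hQ, ← hka]
    rw [G_comp _ _ _ (hka'.cons _)]
    apply G_congrW
    · intro s y r e
      have := congrArg List.length e
      simp at this
      exact hM s y (by omega)
    · intro s₀ s y r e
      have := congrArg List.length e
      simp at this
      exact hM s y (by omega)
  rw [G_comp _ _ _ hkb', hT1 _ (by cases xs <;> simp_all [altg]), C1b m _ hK]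
  simp only [← hkb]
  congr 1
  funext p y
  exact key p y

end Abstract

end OVC
namespace OVC

section Concrete
variable {A B : Type u} [Ring A] [Ring B]

theorem appG_ofFn (κ : ∀ n : ℕ, (Fin n → A) → B) (n : ℕ) (u : Fin n → A) :
    appG κ (List.ofFn u) = κ n u := by
  have : ∀ (l : List A) (h : l.length = n), appG κ l = κ n (fun i => l.get (i.cast h.symm)) := by
    intro l h
    subst h
    rfl
  rw [this _ (List.length_ofFn)]
  congr 1
  funext i
  simp

theorem appG_map {A' : Type u} [Ring A'] (κ : ∀ n : ℕ, (Fin n → A) → B) (h : A' → A)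
    (t : List A') :
    appG (fun m y => κ m fun i => h (y i)) t = appG κ (t.map h) := by
  have e : t.map h = List.ofFn (fun i => h (t.get i)) := by
    apply List.ext_get <;> simp
  rw [e, appG_ofFn]
  rfl

theorem argList_leaf (sm : B → A → A) (f g : ∀ n : ℕ, (Fin n → A) → B) (l : List A) :
    argListG sm f g .leaf l = [] := by
  rw [argListG]

theorem argList_node (sm : B → A → A) (f g : ∀ n : ℕ, (Fin n → A) → B) (σ ρ : PBTree)
    (p : List A) (y : A) (q : List A) (h : σ.size = p.length) :
    argListG sm f g (.node σ ρ) (p ++ y :: q)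
      = sm (treeEvalG sm g f σ p) y :: argListG sm f g ρ q := by
  rw [argListG, h]
  simp

theorem treeEval_leaf (sm : B → A → A) (f g : ∀ n : ℕ, (Fin n → A) → B) (l : List A) :
    treeEvalG sm f g .leaf l = 1 := by
  rw [treeEvalG]

theorem treeEval_node (sm : B → A → A) (f g : ∀ n : ℕ, (Fin n → A) → B) (σ ρ : PBTree)
    (l : List A) :
    treeEvalG sm f g (.node σ ρ) l = appG g (argListG sm f g (.node σ ρ) l) := by
  rw [treeEvalG]

variable (ι : B →+* A) (E : A → B) (κ : ∀ n : ℕ, (Fin n → A) → B)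

/-- Weight of a block. -/
def WE (p : List A) (u : A) : A := ι (E p.prod) * u

theorem treeEval_succ (sm : B → A → A) (f g : ∀ n : ℕ, (Fin n → A) → B) (n : ℕ) (τ : PBTree)
    (h : τ ∈ treesOfSize (n + 1)) (l : List A) :
    treeEvalG sm f g τ l = appG g (argListG sm f g τ l) := by
  cases τ with
  | leaf => have := size_of_mem _ _ h; simp [PBTree.size] at this
  | node σ ρ => exact treeEval_node _ _ _ _ _ _

section hyps
theorem moment_of_add
    (hmc : ∀ l : List A, E l.prod
        = ∑ τ ∈ treesOfSize l.length, treeEvalG (fun b v => ι b * v) κ κ τ l)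
    (l : List A) (hl : l ≠ [])
    (hK : ∀ p u v q, p.length + q.length + 1 < l.length →
      appG κ (p ++ (u + v) :: q) = appG κ (p ++ u :: q) + appG κ (p ++ v :: q)) :
    E l.prod = G (WE ι E) (appG κ) [] l := by
  have h := sum_trees_G (argListG (fun b v => ι b * v) κ κ)
    (fun σ p y => ι (treeEvalG (fun b v => ι b * v) κ κ σ p) * y)
    (argList_leaf _ _ _ _) (fun σ ρ p y q h _ => argList_node _ _ _ _ _ _ _ _ h) l (appG κ) hK
  have hW : (fun (p : List A) y => ∑ σ ∈ treesOfSize p.length,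
      ι (treeEvalG (fun b v => ι b * v) κ κ σ p) * y) = WE ι E := by
    funext p y
    rw [WE, hmc p, map_sum, Finset.sum_mul]
  rw [hW] at h
  rw [← h, hmc l]
  apply Finset.sum_congr rfl
  intro τ hτ
  obtain ⟨n, hn⟩ : ∃ n, l.length = n + 1 :=
    ⟨l.length - 1, by have := List.length_pos_iff.mpr hl; omega⟩
  rw [hn] at hτ
  exact treeEval_succ _ _ _ n τ hτ l

/-- truncation -/
def trunc (n : ℕ) (t : List A) : B := if t.length < n then appG κ t else 0

theorem K_decomp
    (hE1 : E 1 = 1)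
    (hmc : ∀ l : List A, E l.prod
        = ∑ τ ∈ treesOfSize l.length, treeEvalG (fun b v => ι b * v) κ κ τ l)
    (l : List A) (hl : l ≠ [])
    (hK : ∀ p u v q, p.length + q.length + 1 < l.length →
      appG κ (p ++ (u + v) :: q) = appG κ (p ++ u :: q) + appG κ (p ++ v :: q)) :
    appG κ l = E l.prod - G (WE ι E) (trunc κ l.length) [] l := by
  rw [moment_of_add ι E κ hmc l hl hK]
  have h := G_add (WE ι E) (trunc κ l.length) (fun t => appG κ t - trunc κ l.length t) [] l
  have e : (fun t => trunc κ l.length t + (appG κ t - trunc κ l.length t)) = appG κ := by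
    funext t; abel
  rw [e] at h
  rw [h, G_top (WE ι E) (fun t => appG κ t - trunc κ l.length t)]
  · have : l.map (WE ι E []) = l := by
      rw [show WE ι E [] = id by funext u; simp [WE, hE1]]
      simp
    rw [this]
    simp [trunc]
  · intro t _ ht
    simp [trunc, ht]

theorem K_add
    (hE1 : E 1 = 1)
    (hEadd : ∀ u v : A, E (u + v) = E u + E v)
    (hmc : ∀ l : List A, E l.prod
        = ∑ τ ∈ treesOfSize l.length, treeEvalG (fun b v => ι b * v) κ κ τ l)
    : AddF (appG κ) := by
  intro p u v q
  induction hn : p.length + q.length + 1 using Nat.strong_induction_on generalizing p u v q with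
  | _ n ih =>
  have hlen : ∀ w : A, (p ++ w :: q).length = n := by intro w; simp; omega
  have hdec : ∀ w : A, appG κ (p ++ w :: q) = E (p ++ w :: q).prod
      - G (WE ι E) (trunc κ n) [] (p ++ w :: q) := by
    intro w
    have := K_decomp ι E κ hE1 hmc (p ++ w :: q) (by simp) (by
      intro p u v q h
      rw [hlen] at h
      exact ih _ h p u v q rfl)
    rwa [hlen] at this
  have htr : AddF (trunc κ n) := by
    intro p u v q
    simp only [trunc, List.length_append, List.length_cons]
    split
    · exact ih _ (by omega) p u v q rfl
    · simp
  have hprod : ∀ (p q : List A) (u v : A), E (p ++ (u + v) :: q).prod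
      = E (p ++ u :: q).prod + E (p ++ v :: q).prod := by
    intro p q u v
    rw [← hEadd]
    simp [add_mul, mul_add]
  rw [hdec, hdec, hdec, G_addF (WE ι E) _ _ _ htr, hprod]
  · abel
  · intro p u v q y
    simp only [WE, hprod, map_add, add_mul]
  · intro p u v
    simp [WE, mul_add]

theorem moment
    (hE1 : E 1 = 1)
    (hEadd : ∀ u v : A, E (u + v) = E u + E v)
    (hmc : ∀ l : List A, E l.prod
        = ∑ τ ∈ treesOfSize l.length, treeEvalG (fun b v => ι b * v) κ κ τ l)
    (l : List A) (hl : l ≠ []) : E l.prod = G (WE ι E) (appG κ) [] l :=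
  moment_of_add ι E κ hmc l hl (fun p u v q _ => K_add ι E κ hE1 hEadd hmc p u v q)

theorem G_left
    (hEl : ∀ (x : B) (u : A), E (ι x * u) = x * E u)
    (F : List A → B) (x : B) (hF : ∀ u t, F (ι x * u :: t) = x * F (u :: t))
    (u : A) (p l : List A) :
    G (WE ι E) F (ι x * u :: p) l = x * G (WE ι E) F (u :: p) l := by
  induction l generalizing p with
  | nil => simp [G]
  | cons y l ih =>
    simp only [G, List.cons_append, ih, mul_add]
    congr 1
    have : WE ι E (ι x * u :: p) y = ι x * WE ι E (u :: p) y := by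
      simp [WE, mul_assoc, hEl]
    simp only [this, hF]
    exact (G_hom (WE ι E) (AddMonoidHom.mulLeft x) _ _ _).symm

theorem K_left
    (hE1 : E 1 = 1)
    (hEadd : ∀ u v : A, E (u + v) = E u + E v)
    (hEl : ∀ (x : B) (u : A), E (ι x * u) = x * E u)
    (hmc : ∀ l : List A, E l.prod
        = ∑ τ ∈ treesOfSize l.length, treeEvalG (fun b v => ι b * v) κ κ τ l)
    (x : B) (u : A) (q : List A) :
    appG κ (ι x * u :: q) = x * appG κ (u :: q) := by
  induction hn : q.length using Nat.strong_induction_on generalizing u q with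
  | _ n ih =>
  subst hn
  have hdec := fun w : A => K_decomp ι E κ hE1 hmc (w :: q) (by simp)
    (fun p u v q _ => K_add ι E κ hE1 hEadd hmc p u v q)
  simp only [List.length_cons] at hdec
  have htr : ∀ u t, trunc κ (q.length + 1) (ι x * u :: t)
      = x * trunc κ (q.length + 1) (u :: t) := by
    intro u t
    simp only [trunc, List.length_cons]
    split
    · exact ih _ (by omega) u t rfl
    · simp
  rw [hdec, hdec]
  simp only [G, List.nil_append]
  rw [G_left ι E hEl _ x htr]
  have h1 : ∀ v, WE ι E [] v = v := by intro v; simp [WE, hE1]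
  simp only [h1, htr, List.prod_cons, mul_assoc, hEl, mul_sub, mul_add]
  congr 2
  exact (G_hom (WE ι E) (AddMonoidHom.mulLeft x) _ _ _).symm

theorem first_block
    (hE1 : E 1 = 1)
    (hEadd : ∀ u v : A, E (u + v) = E u + E v)
    (hEl : ∀ (x : B) (u : A), E (ι x * u) = x * E u)
    (hmc : ∀ l : List A, E l.prod
        = ∑ τ ∈ treesOfSize l.length, treeEvalG (fun b v => ι b * v) κ κ τ l)
    (u : A) (l : List A) :
    E (u :: l).prod = G (WE ι E) (fun t => appG κ (u :: t)) [] l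
      + spe l (fun p y q => G (WE ι E) (fun t => appG κ (u :: t)) [] p * E (y :: q).prod) := by
  induction hn : l.length using Nat.strong_induction_on generalizing l with
  | _ n ih =>
  subst hn
  have h1 : ∀ v, WE ι E [] v = v := by intro v; simp [WE, hE1]
  have hm := moment ι E κ hE1 hEadd hmc
  have hadd := K_add ι E κ hE1 hEadd hmc
  have hstep : ∀ (y : A) (q : List A), E (y :: q).prod
      = G (WE ι E) (fun t => appG κ (y :: t)) [] q
        + spe q (fun p y' q' => G (WE ι E) (fun t => appG κ (WE ι E (y :: p) y' :: t)) [] q') := by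
    intro y q
    rw [hm (y :: q) (by simp), G, h1, G_spe _ _ ([] ++ [y]) q (by simp)]
    rfl
  rw [hstep u l]
  congr 1
  let φ : A → List A → (B →+ B) := fun y q => AddMonoidHom.mk'
    (fun z => G (WE ι E) (fun t => appG κ (ι z * y :: t)) [] q) (by
      intro z z'
      rw [← G_add]
      apply G_congr
      intro t _
      rw [map_add, add_mul]
      exact hadd [] _ _ t)
  have hφ : ∀ y q z c, φ y q (z * c) = z * φ y q c := by
    intro y q z c
    have := G_hom (WE ι E) (AddMonoidHom.mulLeft z) (fun t => appG κ (ι c * y :: t)) [] q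
    change G (WE ι E) (fun t => appG κ (ι (z * c) * y :: t)) [] q
      = z * G (WE ι E) (fun t => appG κ (ι c * y :: t)) [] q
    rw [AddMonoidHom.coe_mulLeft] at this
    rw [this]
    apply G_congr
    intro t _
    rw [map_mul, mul_assoc, K_left ι E κ hE1 hEadd hEl hmc]
  have hφ1 : ∀ y q z, φ y q z = z * G (WE ι E) (fun t => appG κ (y :: t)) [] q := by
    intro y q z
    have := hφ y q z 1
    rw [mul_one] at this
    rw [this]
    simp [φ]
  have e1 : spe l (fun p y q => G (WE ι E) (fun t => appG κ (WE ι E (u :: p) y :: t)) [] q)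
      = spe l (fun p y q =>
        G (WE ι E) (fun t => appG κ (u :: t)) [] p * G (WE ι E) (fun t => appG κ (y :: t)) [] q
        + spe p (fun p₁ w p₂ => G (WE ι E) (fun t => appG κ (u :: t)) [] p₁ *
            G (WE ι E) (fun t => appG κ (WE ι E (w :: p₂) y :: t)) [] q)) := by
    apply spe_congr
    intro p y q e
    have hp : p.length < l.length := by rw [e]; simp
    change φ y q (E (u :: p).prod) = _
    rw [ih _ hp p rfl, map_add, spe_hom, hφ1]
    simp only [hφ]
    rfl
  rw [e1, spe_add, spe_coassoc, ← spe_add]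
  apply spe_congr
  intro p y q _
  rw [hstep y q, mul_add]
  congr 1
  exact (spe_hom (AddMonoidHom.mulLeft _) q _).symm

end hyps

theorem spe_map {α α' β : Type*} [AddCommMonoid β] (f : α' → α) (l : List α')
    (Φ : List α → α → List α → β) :
    spe (l.map f) Φ = spe l (fun p y q => Φ (p.map f) (f y) (q.map f)) := by
  induction l generalizing Φ with
  | nil => rfl
  | cons x xs ih => simp [spe, ih]

end Concrete

section TreeRHS
variable {B : Type u} [Ring B]

theorem R_size (τ : PBTree) : τ.R.size = 2 * τ.size := by
  induction τ with
  | leaf => rfl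
  | node σ ρ h1 h2 => simp only [PBTree.R, PBTree.size, h1, h2]; omega

theorem altg_length {α β : Type*} (f₁ f₂ : α → β) (p : List α) :
    (altg f₁ f₂ p).length = 2 * p.length := by
  induction p with
  | nil => rfl
  | cons x xs ih => simp only [altg, List.length_cons, ih]; omega

theorem sum_R (f g : ∀ n : ℕ, (Fin n → B) → B) (f₁ f₂ : B → B) (F : List B → B) (hF : AddF F)
    (xs : List B) :
    ∑ τ ∈ treesOfSize xs.length, F (argListG (fun u v : B => u * v) f g τ.R (altg f₁ f₂ xs))
      = G (fun p y => (∑ σ ∈ treesOfSize p.length, treeEvalG (fun u v : B => u * v) g f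
          (.node .leaf σ.R) (altg f₁ f₂ p ++ [f₁ y])) * f₂ y) F [] xs := by
  have h := sum_trees_G
    (fun τ l => argListG (fun u v : B => u * v) f g τ.R (altg f₁ f₂ l))
    (fun σ p y => treeEvalG (fun u v : B => u * v) g f
          (.node .leaf σ.R) (altg f₁ f₂ p ++ [f₁ y]) * f₂ y)
    (argList_leaf _ _ _ _) (by
      intro σ ρ p y q h1 h2
      have e : altg f₁ f₂ (p ++ y :: q)
          = (altg f₁ f₂ p ++ [f₁ y]) ++ f₂ y :: altg f₁ f₂ q := by
        simp [altg_append, altg]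
      simp only [PBTree.R]
      rw [e, argList_node]
      simp [PBTree.size, R_size, altg_length, h1]) xs F (fun p u v q _ => hF p u v q)
  rw [h]
  simp only [Finset.sum_mul]

variable (f g : ∀ n : ℕ, (Fin n → B) → B)

/-- the auxiliary series `N` -/
noncomputable def Ns (xs : List B) : B :=
  ∑ σ ∈ treesOfSize xs.length, treeEvalG (fun u v : B => u * v) f g
    (.node .leaf σ.R) (1 :: altg id (fun _ => 1) xs)

/-- the auxiliary series `Q` -/
noncomputable def Qs : List B → B
  | [] => 0
  | z :: t => ∑ σ ∈ treesOfSize t.length, treeEvalG (fun u v : B => u * v) g f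
    (.node .leaf σ.R) (z :: altg (fun _ => 1) id t)

theorem treeEval_nl (f g : ∀ n : ℕ, (Fin n → B) → B) (τ : PBTree) (z : B) (l : List B) :
    treeEvalG (fun u v : B => u * v) f g (.node .leaf τ) (z :: l)
      = appG g (z :: argListG (fun u v : B => u * v) f g τ l) := by
  rw [treeEval_node, argListG, treeEval_leaf]
  simp [PBTree.size]

theorem altg_one (p : List B) :
    altg (fun _ => (1 : B)) id p ++ [1] = 1 :: altg id (fun _ => 1) p := by
  induction p with
  | nil => rfl
  | cons x xs ih => simp [altg, ih]

theorem wQ (p : List B) (y : B) :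
    (∑ σ ∈ treesOfSize p.length, treeEvalG (fun u v : B => u * v) g f
          (.node .leaf σ.R) (altg id (fun _ => 1) p ++ [id y])) * 1 = Qs f g (p ++ [y]) := by
  rw [altg_swap _ _ (fun _ _ => rfl), mul_one]
  obtain ⟨x, r, e⟩ : ∃ x r, p ++ [y] = x :: r := by
    cases p <;> simp
  have hl : p.length = r.length := by
    have := congrArg List.length e
    simpa using this
  simp only [e, Qs, hl]
  rfl

theorem Ns_eq (hg : AddF (appG g)) (xs : List B) :
    Ns f g xs = G (fun p y => Qs f g (p ++ [y])) (fun t => appG g (1 :: t)) [] xs := by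
  have h := sum_R f g id (fun _ => 1) _ (hg.cons 1) xs
  simp only [wQ] at h
  rw [← h, Ns]
  simp only [treeEval_nl]

theorem Qs_eq (hf : AddF (appG f)) (z : B) (t : List B) :
    Qs f g (z :: t) = G (fun p y => Ns f g p * y) (fun t => appG f (z :: t)) [] t := by
  have h := sum_R g f (fun _ => 1) id _ (hf.cons z) t
  simp only [altg_one, id] at h
  change _ = G (fun p y => Ns f g p * y) _ _ _ at h
  rw [← h, Qs]
  simp only [treeEval_nl]

theorem Ps_eq (hg : AddF (appG g)) (xs : List B) (hxs : xs ≠ []) :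
    ∑ τ ∈ treesOfSize xs.length, treeEvalG (fun u v : B => u * v) f g τ.R
        (altg id (fun _ => 1) xs)
      = G (fun p y => Qs f g (p ++ [y])) (appG g) [] xs := by
  have h := sum_R f g id (fun _ => 1) _ hg xs
  simp only [wQ] at h
  rw [← h]
  apply Finset.sum_congr rfl
  intro τ hτ
  cases τ with
  | leaf =>
    have := size_of_mem _ _ hτ
    have := List.length_pos_iff.mpr hxs
    simp [PBTree.size] at *
    omega
  | node σ ρ => exact treeEval_node _ _ _ _ _ _

end TreeRHS

end OVC
/-- Operator-valued cumulants of a product of two free random variables: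
`k^{ab} = k^a ⊠ k^b`, i.e. for all `n ≥ 1`,
`k^{ab}_n(x₁,…,xₙ) = ∑_{τ ∈ Y_n} (k^a ∪ k^b)_{R(τ)}(x₁, 1, x₂, 1, …, 1, xₙ, 1)`. -/
theorem cumulants_of_product_of_free {A B : Type u} [Ring A] [Ring B]
    (ι : B →+* A) (E : A → B)
    (hE1 : E 1 = 1)
    (hEadd : ∀ u v : A, E (u + v) = E u + E v)
    (hEbal : ∀ (x y : B) (u : A), E (ι x * u * ι y) = x * E u * y)
    (κ : ∀ n : ℕ, (Fin n → A) → B)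
    (hmc : ∀ (n : ℕ) (u : Fin n → A),
      E (List.ofFn u).prod
        = ∑ τ ∈ treesOfSize n, treeEvalG (fun b v => ι b * v) κ κ τ (List.ofFn u))
    (a b : A)
    (hfree : ∀ (n : ℕ) (c : Fin (n + 1) → A) (x : Fin n → B),
      (∀ i, c i = a ∨ c i = b) → (∃ i, c i = a) → (∃ j, c j = b) →
      κ (n + 1) (Fin.cons (c 0) fun i : Fin n => ι (x i) * c i.succ) = 0) :
    ∀ (n : ℕ) (x : Fin (n + 1) → B),
      κ (n + 1) (fun i => ι (x i) * (a * b))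
        = ∑ τ ∈ treesOfSize (n + 1),
            treeEvalG (fun u v : B => u * v)
              (fun m y => κ m fun i => ι (y i) * a)
              (fun m y => κ m fun i => ι (y i) * b)
              τ.R ((List.ofFn x).foldr (fun v acc => v :: (1 : B) :: acc) []) := by
  intro n x
  have hEl : ∀ (x : B) (u : A), E (ι x * u) = x * E u := by
    intro x u
    have := hEbal x 1 u
    simpa using this
  have hmc' : ∀ l : List A, E l.prod
      = ∑ τ ∈ treesOfSize l.length, treeEvalG (fun b v => ι b * v) κ κ τ l := by
    intro l
    have := hmc l.length l.get
    simpa only [List.ofFn_get] using this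
  have hadd := OVC.K_add ι E κ hE1 hEadd hmc'
  let tg : Bool → A := fun c => if c then b else a
  let toA : B × Bool → A := fun y => ι y.1 * tg y.2
  let m : List (B × Bool) → B := fun l => E (l.map toA).prod
  let Kt : List (B × Bool) → B := fun t => appG κ (t.map toA)
  have hWt : ∀ p y, OVC.WE ι E (p.map toA) (toA y) = toA (OVC.Wt m p y) := by
    intro p y
    simp [OVC.WE, OVC.Wt, toA, m, mul_assoc]
  have hm0 : m [] = 1 := by simp [m, hE1]
  have hT1 : ∀ l, l ≠ [] → m l = OVC.G (OVC.Wt m) Kt [] l := by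
    intro l hl
    have h1 := OVC.moment ι E κ hE1 hEadd hmc' (l.map toA) (by simpa using hl)
    have h2 := OVC.G_map (OVC.WE ι E) (OVC.Wt m) toA toA hWt (appG κ) [] l
    exact h1.trans h2
  have hT2 : ∀ u l, m (u :: l) = OVC.G (OVC.Wt m) (fun t => Kt (u :: t)) [] l
      + OVC.spe l (fun p y q => OVC.G (OVC.Wt m) (fun t => Kt (u :: t)) [] p * m (y :: q)) := by
    intro u l
    have h1 := OVC.first_block ι E κ hE1 hEadd hEl hmc' (toA u) (l.map toA)
    rw [OVC.spe_map] at h1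
    have h2 := OVC.G_map (OVC.WE ι E) (OVC.Wt m) toA toA hWt (fun t => appG κ (toA u :: t)) []
    simp only [List.map_nil] at h2
    simp only [h2] at h1
    exact h1
  have hVB : OVC.VB Kt := by
    have main : ∀ t : List (B × Bool), (∃ z, (z, false) ∈ t) → (∃ z, (z, true) ∈ t) →
        Kt t = 0 := by
      intro t h1 h2
      cases t with
      | nil => simp at h1
      | cons y t =>
        have e : Kt (y :: t) = y.1 * appG κ (tg y.2 :: t.map toA) :=
          OVC.K_left ι E κ hE1 hEadd hEl hmc' y.1 (tg y.2) (t.map toA)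
        have e2 : tg y.2 :: t.map toA = List.ofFn (Fin.cons (tg ((y :: t).get 0).2)
            (fun i : Fin t.length => ι (t.get i).1 * tg ((y :: t).get i.succ).2) :
              Fin (t.length + 1) → A) := by
          rw [List.ofFn_succ]
          simp only [Fin.cons_zero, Fin.cons_succ]
          congr 1
          apply List.ext_get <;> simp [toA]
        rw [e, e2, OVC.appG_ofFn,
          hfree t.length (fun i => tg ((y :: t).get i).2) (fun i => (t.get i).1), mul_zero]
        · intro i
          by_cases h : ((y :: t).get i).2 = true
          · right; simp only [tg, h]; simp
          · left; simp only [tg, h]; simp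
        · obtain ⟨z, hz⟩ := h1
          obtain ⟨i, hi⟩ := List.get_of_mem hz
          exact ⟨i, by simp only [hi, tg]; simp⟩
        · obtain ⟨z, hz⟩ := h2
          obtain ⟨i, hi⟩ := List.get_of_mem hz
          exact ⟨i, by simp only [hi, tg]; simp⟩
    intro t z z' c h1 h2
    cases c with
    | false => exact main t ⟨z, h1⟩ ⟨z', h2⟩
    | true => exact main t ⟨z', h2⟩ ⟨z, h1⟩
  set f : ∀ n : ℕ, (Fin n → B) → B := fun m y => κ m fun i => ι (y i) * a with hf
  set g : ∀ n : ℕ, (Fin n → B) → B := fun m y => κ m fun i => ι (y i) * b with hg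
  have hka : ∀ t, appG f t = Kt (t.map (fun z => (z, false))) := by
    intro t
    rw [hf, OVC.appG_map κ (fun z => ι z * a)]
    simp only [Kt, List.map_map]
    rfl
  have hkb : ∀ t, appG g t = Kt (t.map (fun z => (z, true))) := by
    intro t
    rw [hg, OVC.appG_map κ (fun z => ι z * b)]
    simp only [Kt, List.map_map]
    rfl
  have haddmap : ∀ c : A, OVC.AddF (fun t : List B => appG κ (t.map (fun z => ι z * c))) := by
    intro c p u v q
    simp only [List.map_append, List.map_cons, map_add, add_mul]
    exact hadd _ _ _ _
  have hfa : OVC.AddF (appG f) := by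
    have := haddmap a
    simp only [← OVC.appG_map] at this
    exact this
  have hga : OVC.AddF (appG g) := by
    have := haddmap b
    simp only [← OVC.appG_map] at this
    exact this
  let U : List B → B → B := fun p y => m (OVC.altg OVC.la OVC.lb p) * y
  let P : List B → B := fun t => OVC.G (fun p y => OVC.Qs f g (p ++ [y])) (appG g) [] t
  let h : B → A := fun z => ι z * (a * b)
  let k : List B → B := fun t => appG κ (t.map h)
  have hP : ∀ xs, xs ≠ [] → m (OVC.altg OVC.la OVC.lb xs) = OVC.G U P [] xs :=
    OVC.abstract_main m Kt hm0 hT1 hT2 hVB (appG f) (appG g) hka hkb hfa hga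
      (OVC.Ns f g) (OVC.Qs f g) (OVC.Ns_eq f g hga) (OVC.Qs_eq f g hfa)
  have hprod : ∀ xs : List B,
      ((OVC.altg OVC.la OVC.lb xs).map toA).prod = (xs.map h).prod := by
    intro xs
    induction xs with
    | nil => rfl
    | cons y ys ih =>
      simp only [OVC.altg, List.map_cons, List.prod_cons, ih]
      simp [toA, OVC.la, OVC.lb, tg, h, mul_assoc]
  have hk : ∀ xs, xs ≠ [] → m (OVC.altg OVC.la OVC.lb xs) = OVC.G U k [] xs := by
    intro xs hxs
    have h1 := OVC.moment ι E κ hE1 hEadd hmc' (xs.map h) (by simpa using hxs)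
    have h2 := OVC.G_map (OVC.WE ι E) U h h (by
      intro p y
      simp [OVC.WE, U, m, hprod, h, mul_assoc]) (appG κ) [] xs
    have h3 : m (OVC.altg OVC.la OVC.lb xs) = E (xs.map h).prod := by simp only [m, hprod]
    exact h3.trans (h1.trans h2)
  have huniq : ∀ xs, xs ≠ [] → k xs = P xs := by
    intro xs
    induction hn : xs.length using Nat.strong_induction_on generalizing xs with
    | _ n ih =>
    subst hn
    intro hxs
    have h1 := OVC.G_add U P (fun t => k t - P t) [] xs
    have e : (fun t => P t + (k t - P t)) = k := by funext t; abel
    rw [e, ← hk xs hxs, ← hP xs hxs, OVC.G_top U (fun t => k t - P t) xs] at h1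
    · have e2 : xs.map (U []) = xs := by
        rw [show U [] = id by funext u; simp [U, OVC.altg, hm0]]
        simp
      rw [e2] at h1
      exact sub_eq_zero.mp (left_eq_add.mp h1)
    · intro t ht hlt
      exact sub_eq_zero.mpr (ih _ hlt t rfl ht)
  have hfin := huniq (List.ofFn x) (by simp)
  have hl : κ (n + 1) (fun i => ι (x i) * (a * b)) = k (List.ofFn x) := by
    rw [← OVC.appG_ofFn κ]
    simp only [k, List.map_ofFn]
    rfl
  rw [hl, hfin]
  have hps := OVC.Ps_eq f g hga (List.ofFn x) (by simp)
  rw [List.length_ofFn] at hps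
  have hfold : ∀ xs : List B, xs.foldr (fun v acc => v :: (1 : B) :: acc) []
      = OVC.altg id (fun _ => 1) xs := by
    intro xs
    induction xs with
    | nil => rfl
    | cons y ys ih => simp [OVC.altg, ih]
  rw [hfold]
  exact hps.symm
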